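/- arXiv:1006.2215 — 6 statements merged into one kernel-verified Lean document; each statement's English description precedes it below -/
import Mathlib

section
/- Let α be a finite nonempty type, let A ⊆ α be a nonempty subset, and let p be a probability mass function on α. Then the infimum, over all probability mass functions q on α whose support is contained in A, of the total variation distance TV(p, q) is attained and equals p(α \ A), the total probability that p assigns to the complement of A. (Applied with A the diagonal of S×S this says a protocol is ε-correct iff Pr[S_A ≠ S_B] ≤ ε; applied with A = S it says a protocol is ε-robust iff Pr[S_A = ⊥] ≤ ε.) -/
/-- For a pmf `p` on a finite nonempty type `α` and a nonempty subset
`A ⊆ α`, the infimum over all pmfs `q` supported in `A` of the total variation distance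
`TV(p,q) = (1/2)·∑ₓ |p x − q x|` is attained and equals `p(α \ A) = ∑_{x ∉ A} p x`. -/
theorem stmt_0 {α : Type*} [Fintype α] [Nonempty α] [DecidableEq α]
    (A : Finset α) (hA : A.Nonempty)
    (p : α → ℝ) (hp0 : ∀ x, 0 ≤ p x) (hp1 : ∑ x, p x = 1) :
    IsLeast {t : ℝ | ∃ q : α → ℝ, (∀ x, 0 ≤ q x) ∧ (∑ x, q x = 1) ∧
        (∀ x ∉ A, q x = 0) ∧ t = (1 / 2) * ∑ x, |p x - q x|}
      (∑ x ∈ Aᶜ, p x) := by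
  have hsplit : ∀ f : α → ℝ, ∑ x ∈ A, f x + ∑ x ∈ Aᶜ, f x = ∑ x, f x :=
    fun f => Finset.sum_add_sum_compl A f
  have hs : 0 ≤ ∑ x ∈ Aᶜ, p x := Finset.sum_nonneg fun x _ => hp0 x
  constructor
  · obtain ⟨a, ha⟩ := hA
    generalize hsd : ∑ x ∈ Aᶜ, p x = s at hs
    have hpa := hsplit p
    have h1 : ∑ x, (if x ∈ A then p x else 0) = ∑ x ∈ A, p x := by
      simp
    have h2 : ∑ x, (if x = a then s else 0) = s := by
      simp
    have h3 : ∑ x, (if x ∈ A then 0 else p x) = s := by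
      rw [← hsplit, Finset.sum_eq_zero (s := A), ← hsd, zero_add]
      · apply Finset.sum_congr rfl
        intro x hx
        rw [if_neg (Finset.mem_compl.mp hx)]
      · intro x hx
        rw [if_pos hx]
    refine ⟨fun x => (if x ∈ A then p x else 0) + (if x = a then s else 0), ?_, ?_, ?_, ?_⟩
    · intro x
      have := hp0 x
      dsimp only
      split_ifs <;> linarith
    · rw [Finset.sum_add_distrib, h1, h2]
      linarith
    · intro x hx
      have hxa : x ≠ a := fun h => hx (h ▸ ha)
      simp [hx, hxa]
    · have h4 : ∀ x, |p x - ((if x ∈ A then p x else 0) + (if x = a then s else 0))|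
          = (if x ∈ A then 0 else p x) + (if x = a then s else 0) := by
        intro x
        by_cases hx : x ∈ A
        · by_cases hxa : x = a
          · subst hxa
            simp [hx, abs_of_nonneg hs]
          · simp [hx, hxa]
        · have hxa : x ≠ a := fun h => hx (h ▸ ha)
          simp [hx, hxa, abs_of_nonneg (hp0 x)]
      simp only [h4]
      rw [Finset.sum_add_distrib, h2, h3]
      ring
  · rintro t ⟨q, hq0, hq1, hqA, rfl⟩
    have e1 := hsplit (fun x => |p x - q x|)
    have e2 := hsplit p
    have e3 := hsplit q
    have e4 : ∑ x ∈ Aᶜ, q x = 0 :=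
      Finset.sum_eq_zero fun x hx => hqA x (Finset.mem_compl.mp hx)
    have e5 : ∑ x ∈ Aᶜ, |p x - q x| = ∑ x ∈ Aᶜ, p x := by
      apply Finset.sum_congr rfl
      intro x hx
      rw [hqA x (Finset.mem_compl.mp hx), sub_zero, abs_of_nonneg (hp0 x)]
    have e6 : ∑ x ∈ A, (q x - p x) ≤ ∑ x ∈ A, |p x - q x| := by
      apply Finset.sum_le_sum
      intro x _
      rw [abs_sub_comm]
      exact le_abs_self _
    rw [Finset.sum_sub_distrib] at e6
    linarith
end

section
/- Let n ≥ 1, let 𝒵 be a finite nonempty type, and let P be a probability mass function on {0,1}^n × 𝒵 with marginals P_X on {0,1}^n and P_Z on 𝒵. Suppose there exists a probability mass function Q on 𝒵 and a real 0 ≤ ε ≤ 1/2 such that (1/2)·∑_{x,z} |P(x,z) − 2^{−n}·Q(z)| ≤ ε. Then the mutual information I(X;Z) := ∑_{x,z : P(x,z) > 0} P(x,z)·log₂( P(x,z) / (P_X(x)·P_Z(z)) ) satisfies I(X;Z) ≤ 2nε + 4h(ε), where h(ε) := −ε·log₂ ε − (1−ε)·log₂(1−ε) is the binary entropy (with h(0)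 := 0). (This is the Fano-type bound showing that ε-closeness of a key–adversary joint distribution to an ideal product of the uniform key with an independent adversary distribution forces the adversary's information about the key to be small.) -/
/-- Pointwise bound (natural logarithms), with `u = 2^n`. -/
lemma stmt_4_point (p q b c u : ℝ) (hp : 0 < p) (hq : 0 ≤ q) (hb : 0 < b) (hpc : p ≤ c)
    (hu : 1 ≤ u) :
    p * Real.log (p / (b * c)) ≤ (p - min p (u⁻¹ * q)) * Real.log u
      + (p - min p (u⁻¹ * q)) + (p * q / c - min p (u⁻¹ * q)) + (p * u⁻¹ / b - p) := by
  have hu0 : 0 < u := by linarith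
  have hc : 0 < c := by linarith
  have e1 : Real.log (p / (b * c)) = Real.log (p * u / c) + Real.log (u⁻¹ / b) := by
    rw [← Real.log_mul (by positivity) (by positivity)]
    congr 1
    field_simp
  have h1 : p * Real.log (u⁻¹ / b) ≤ p * u⁻¹ / b - p := by
    have := Real.log_le_sub_one_of_pos (show 0 < u⁻¹ / b by positivity)
    have := mul_le_mul_of_nonneg_left this hp.le
    calc _ ≤ _ := this
      _ = _ := by ring
  set m := min p (u⁻¹ * q) with hm
  have hmp : m ≤ p := min_le_left _ _
  have hmq : m ≤ u⁻¹ * q := min_le_right _ _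
  have hm0 : 0 ≤ m := le_min hp.le (by positivity)
  have h2 : (p - m) * Real.log (p * u / c) ≤ (p - m) * Real.log u := by
    apply mul_le_mul_of_nonneg_left _ (by linarith)
    apply Real.log_le_log (by positivity)
    rw [div_le_iff₀ hc]
    nlinarith
  have h3 : m * Real.log (p * u / c) ≤ (p - m) + (p * q / c - m) := by
    rcases hm0.eq_or_lt with h | h
    · rw [← h]
      have : 0 ≤ p * q / c := by positivity
      linarith
    · have e : Real.log (p * u / c) = Real.log (p / m) + Real.log (m * u / c) := by
        rw [← Real.log_mul (by positivity) (by positivity)]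
        congr 1
        field_simp
      have a1 := mul_le_mul_of_nonneg_left
        (Real.log_le_sub_one_of_pos (show 0 < p / m by positivity)) h.le
      have a2 := mul_le_mul_of_nonneg_left
        (Real.log_le_sub_one_of_pos (show 0 < m * u / c by positivity)) h.le
      have a3 : m * (p / m - 1) = p - m := by field_simp
      have a4 : m * (m * u / c) ≤ p * q / c := by
        rw [← mul_div_assoc]
        apply div_le_div_of_nonneg_right _ hc.le
        have : m * u ≤ q := by
          calc m * u ≤ u⁻¹ * q * u := by gcongr
            _ = q := by field_simp
        exact mul_le_mul hmp this (by positivity) hp.le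
      rw [e, mul_add]
      linarith
  rw [e1, mul_add]
  nlinarith


open Classical in
/-- If the joint distribution `P` of an `n`-bit key `X` and an adversary
system `Z` is within total variation distance `ε ≤ 1/2` of the product of the uniform
distribution on `{0,1}ⁿ` with some distribution `Q` on `𝒵`, then the mutual information
`I(X;Z)` (in bits) is at most `2nε + 4h(ε)`, where `h` is the binary entropy. -/
theorem stmt_4 (n : ℕ) (hn : 1 ≤ n) (𝒵 : Type*) [Fintype 𝒵] [Nonempty 𝒵]
    (P : ((Fin n → Bool) × 𝒵) → ℝ) (hP0 : ∀ x, 0 ≤ P x) (hP1 : ∑ x, P x = 1)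
    (Q : 𝒵 → ℝ) (hQ0 : ∀ z, 0 ≤ Q z) (hQ1 : ∑ z, Q z = 1)
    (ε : ℝ) (hε0 : 0 ≤ ε) (hε2 : ε ≤ 1 / 2)
    (hclose : (1 / 2) * ∑ x : (Fin n → Bool) × 𝒵,
        |P x - ((2 : ℝ) ^ n)⁻¹ * Q x.2| ≤ ε) :
    (∑ x ∈ Finset.univ.filter (fun x : (Fin n → Bool) × 𝒵 => 0 < P x),
        P x * Real.logb 2 (P x / ((∑ z, P (x.1, z)) * (∑ w, P (w, x.2)))))
      ≤ 2 * n * ε + 4 * (-(ε * Real.logb 2 ε) - (1 - ε) * Real.logb 2 (1 - ε)) := by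
  have hu : (1 : ℝ) ≤ 2 ^ n := one_le_pow₀ (by norm_num)
  have hl2 : 0 < Real.log 2 := Real.log_pos (by norm_num)
  have hX : ∀ x : (Fin n → Bool) × 𝒵, P x ≤ ∑ z, P (x.1, z) := fun x =>
    Finset.single_le_sum (f := fun z => P (x.1, z)) (fun z _ => hP0 _) (Finset.mem_univ x.2)
  have hZ : ∀ x : (Fin n → Bool) × 𝒵, P x ≤ ∑ w, P (w, x.2) := fun x =>
    Finset.single_le_sum (f := fun w => P (w, x.2)) (fun z _ => hP0 _) (Finset.mem_univ x.1)
  set u : ℝ := 2 ^ n with hudef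
  have hu0 : 0 < u := by linarith
  set m : (Fin n → Bool) × 𝒵 → ℝ := fun x => min (P x) (u⁻¹ * Q x.2) with hm
  set d : ℝ := ∑ x, (P x - m x) with hd
  have hcard : (∑ _x : Fin n → Bool, u⁻¹) = 1 := by
    simp [hudef]
  have hR : ∑ x : (Fin n → Bool) × 𝒵, u⁻¹ * Q x.2 = 1 := by
    rw [Fintype.sum_prod_type]
    simp only [← Finset.mul_sum, hQ1, mul_one]
    exact hcard
  have hdε : d ≤ ε := by
    have : ∀ x, P x - m x = (1/2) * |P x - u⁻¹ * Q x.2| + (1/2) * (P x - u⁻¹ * Q x.2) := by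
      intro x
      simp only [hm]
      rcases le_total (P x) (u⁻¹ * Q x.2) with h | h
      · rw [min_eq_left h, abs_of_nonpos (by linarith)]; ring
      · rw [min_eq_right h, abs_of_nonneg (by linarith)]; ring
    rw [hd, Finset.sum_congr rfl (fun x _ => this x), Finset.sum_add_distrib,
      ← Finset.mul_sum, ← Finset.mul_sum, Finset.sum_sub_distrib, hP1, hR]
    linarith
  have hsm : ∑ x, m x = 1 - d := by
    rw [hd, Finset.sum_sub_distrib, hP1]; ring
  have s1 : ∑ x : (Fin n → Bool) × 𝒵, P x * Q x.2 / (∑ w, P (w, x.2)) ≤ 1 := by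
    rw [Fintype.sum_prod_type_right, ← hQ1]
    apply Finset.sum_le_sum
    intro z _
    simp only
    rw [← Finset.sum_div, ← Finset.sum_mul]
    apply div_le_of_le_mul₀ (Finset.sum_nonneg fun _ _ => hP0 _) (hQ0 z)
    rw [mul_comm]
  have s2 : ∑ x : (Fin n → Bool) × 𝒵, P x * u⁻¹ / (∑ z, P (x.1, z)) ≤ 1 := by
    rw [Fintype.sum_prod_type, ← hcard]
    apply Finset.sum_le_sum
    intro z _
    simp only
    rw [← Finset.sum_div, ← Finset.sum_mul]
    apply div_le_of_le_mul₀ (Finset.sum_nonneg fun _ _ => hP0 _) (by positivity)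
    rw [mul_comm]
  have main : ∑ x ∈ Finset.univ.filter (fun x : (Fin n → Bool) × 𝒵 => 0 < P x),
        P x * Real.log (P x / ((∑ z, P (x.1, z)) * (∑ w, P (w, x.2))))
      ≤ d * Real.log u + d + (1 - (1 - d)) + (1 - 1) := by
    calc _ ≤ ∑ x : (Fin n → Bool) × 𝒵, ((P x - m x) * Real.log u + (P x - m x)
            + (P x * Q x.2 / (∑ w, P (w, x.2)) - m x)
            + (P x * u⁻¹ / (∑ z, P (x.1, z)) - P x)) := by
          rw [Finset.sum_filter]
          apply Finset.sum_le_sum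
          intro x _
          split_ifs with h
          · exact stmt_4_point _ _ _ _ _ h (hQ0 _) (h.trans_le (hX x)) (hZ x) hu
          · have h0 : P x = 0 := le_antisymm (not_lt.mp h) (hP0 x)
            have hq : 0 ≤ u⁻¹ * Q x.2 := mul_nonneg (by positivity) (hQ0 _)
            have hm0 : m x = 0 := by simp only [hm, h0]; exact min_eq_left hq
            simp [h0, hm0]
      _ ≤ _ := by
          simp only [Finset.sum_add_distrib, Finset.sum_sub_distrib (f := fun x : (Fin n → Bool) × 𝒵 => P x * Q x.2 / (∑ w, P (w, x.2))),
            Finset.sum_sub_distrib (f := fun x : (Fin n → Bool) × 𝒵 => P x * u⁻¹ / (∑ z, P (x.1, z))),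
            ← Finset.sum_mul, hsm, hP1, ← hd]
          linarith
  have hlogu : Real.log u = n * Real.log 2 := by rw [hudef, Real.log_pow]
  have hL : (∑ x ∈ Finset.univ.filter (fun x : (Fin n → Bool) × 𝒵 => 0 < P x),
        P x * Real.logb 2 (P x / ((∑ z, P (x.1, z)) * (∑ w, P (w, x.2)))))
      = (∑ x ∈ Finset.univ.filter (fun x : (Fin n → Bool) × 𝒵 => 0 < P x),
        P x * Real.log (P x / ((∑ z, P (x.1, z)) * (∑ w, P (w, x.2))))) / Real.log 2 := by
    simp only [Real.logb, Finset.sum_div, mul_div_assoc]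
  have hRR : 2 * n * ε + 4 * (-(ε * Real.logb 2 ε) - (1 - ε) * Real.logb 2 (1 - ε))
      = (2 * n * ε * Real.log 2 + 4 * (-(ε * Real.log ε) - (1 - ε) * Real.log (1 - ε)))
        / Real.log 2 := by
    simp only [Real.logb]
    field_simp
  rw [hL, hRR]
  apply div_le_div_of_nonneg_right _ hl2.le
  refine main.trans ?_
  rw [hlogu]
  have k1 : ε * Real.log ε ≤ 0 :=
    mul_nonpos_of_nonneg_of_nonpos hε0 (Real.log_nonpos hε0 (by linarith))
  have k2 : (1 - ε) * Real.log (1 - ε) ≤ (1 - ε) * (-ε) := by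
    apply mul_le_mul_of_nonneg_left _ (by linarith)
    have := Real.log_le_sub_one_of_pos (show 0 < 1 - ε by linarith)
    linarith
  have k3 : (0 : ℝ) ≤ n * Real.log 2 := by positivity
  have k4 : d * (n * Real.log 2) ≤ ε * (n * Real.log 2) := mul_le_mul_of_nonneg_right hdε k3
  have k5 : 0 ≤ ε * (n * Real.log 2) := mul_nonneg hε0 k3
  nlinarith
end

section
/- Let M₀ and M₁ be positive semidefinite 2×2 complex matrices with M₀ + M₁ = I. Then the average success probability of guessing a uniformly random bit r encoded in a uniformly random BB84 basis s, namely (1/4)·( ⟨0|₀ M₀ |0⟩₀ + ⟨1|₀ M₁ |1⟩₀ + ⟨0|₁ M₀ |0⟩₁ + ⟨1|₁ M₁ |1⟩₁ ) = (1/4)·( e₀*M₀e₀ + e₁*M₁e₁ + f₀*M₀f₀ + f₁*M₁f₁ ), is a real number and is at most (2 + √2)/4. (This shows the probability p of correctly reading a bit encoded in an unknown conjugate basis is bounded away from 1.) -/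
open Matrix
open scoped ComplexOrder

/-- `|0⟩₀ = (1,0)` (the component at index `false` is the first coordinate). -/
noncomputable def e0 : Bool → ℂ := fun t => if t then 0 else 1

/-- `|1⟩₀ = (0,1)`. -/
noncomputable def e1 : Bool → ℂ := fun t => if t then 1 else 0

/-- `|0⟩₁ = (1/√2)(1,1)`. -/
noncomputable def f0 : Bool → ℂ := fun _ => ((1 / Real.sqrt 2 : ℝ) : ℂ)

/-- `|1⟩₁ = (1/√2)(1,−1)`. -/
noncomputable def f1 : Bool → ℂ := fun t =>
  if t then -((1 / Real.sqrt 2 : ℝ) : ℂ) else ((1 / Real.sqrt 2 : ℝ) : ℂ)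

/-- For any two-outcome POVM `(M₀, M₁)` on a qubit (`M₀, M₁ ⪰ 0`,
`M₀ + M₁ = I`), the average probability of guessing a uniformly random bit `r` encoded in
a uniformly random BB84 basis `s`, namely
`(1/4)·(e₀*M₀e₀ + e₁*M₁e₁ + f₀*M₀f₀ + f₁*M₁f₁)`,
is a real number and is at most `(2+√2)/4`. -/
theorem stmt_6 (M₀ M₁ : Matrix Bool Bool ℂ)
    (h₀ : M₀.PosSemidef) (h₁ : M₁.PosSemidef) (hsum : M₀ + M₁ = 1) :
    ∃ t : ℝ,
      ((1 / 4 : ℂ) *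
          ((star e0 ⬝ᵥ (M₀ *ᵥ e0)) + (star e1 ⬝ᵥ (M₁ *ᵥ e1)) +
            (star f0 ⬝ᵥ (M₀ *ᵥ f0)) + (star f1 ⬝ᵥ (M₁ *ᵥ f1)))) = (t : ℂ)
      ∧ t ≤ (2 + Real.sqrt 2) / 4 := by
  have hs : Real.sqrt 2 * Real.sqrt 2 = 2 := Real.mul_self_sqrt (by norm_num)
  have hs1 : 1 < Real.sqrt 2 := by
    rw [Real.lt_sqrt] <;> norm_num
  have hr : (1 / Real.sqrt 2) * (1 / Real.sqrt 2) = 1 / 2 := by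
    rw [div_mul_div_comm, hs, one_mul]
  have hM : M₁ = 1 - M₀ := by rw [← hsum]; simp
  have v := h₀.dotProduct_mulVec_nonneg
    (fun t => if t then ((Real.sqrt 2 + 1 : ℝ) : ℂ) else ((-1 : ℝ) : ℂ))
  have w := h₁.dotProduct_mulVec_nonneg
    (fun t => if t then ((1 : ℝ) : ℂ) else ((Real.sqrt 2 + 1 : ℝ) : ℂ))
  have hff := h₀.1.apply false false
  have htt := h₀.1.apply true true
  have hft := h₀.1.apply false true
  subst hM
  rw [Complex.le_def] at v w
  have v1 := v.1
  have w1 := w.1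
  clear v w
  have hff' := congrArg Complex.im hff
  have htt' := congrArg Complex.im htt
  have hft' := congrArg Complex.im hft
  have hft'' := congrArg Complex.re hft
  simp [dotProduct, mulVec, Matrix.one_apply] at v1 w1 hff' htt' hft' hft''
  unfold e0 e1 f0 f1
  generalize Real.sqrt 2 = q at *
  refine ⟨(2 + ((M₀ false false).re - (M₀ true true).re) + 2 * (M₀ false true).re) / 4, ?_, ?_⟩
  · generalize 1 / q = r at *
    apply Complex.ext
    · simp [dotProduct, mulVec, Matrix.one_apply]
      linear_combination (1/4) * (2 + 2 * (M₀ false true).re + 2 * (M₀ true false).re) * hr + (1/4) * hft''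
    · simp [dotProduct, mulVec, Matrix.one_apply]
      linear_combination (-1/2) * hff' + (1/2) * htt' - 2 * r ^ 2 * hft'
  · rw [hft''] at v1 w1
    have key : 0 ≤ (2 * (q + 1)) *
        (q - ((M₀ false false).re - (M₀ true true).re) - 2 * (M₀ false true).re) := by
      linear_combination v1 + w1 - (1 + (M₀ false false).re - (M₀ true true).re) * hs
    have := nonneg_of_mul_nonneg_right key (by linarith)
    linarith
end

section
/- Fix n ≥ 1 and for b ∈ {0,1} define the 2^n × 2^n density matrix ρ^{s,b} := 2^{−(n−1)} ∑_{r ∈ {0,1}^n : r₁⊕⋯⊕rₙ = b} |φ^{s,r}⟩⟨φ^{s,r}|. Then for every s ∈ {0,1}^n there exist positive semidefinite matrices M₀ and M₁ with M₀ + M₁ = I_{2^n} such that tr(M_b · ρ^{s,b'}) = 1 if b = b' and tr(M_b · ρ^{s,b'}) = 0 if b ≠ b'. (This is the attack: an adversary who learns the basis string s from a one-time-pad ciphertext and known message bits can measure her quantum system and recover the parity bit S_{n+1} = R₁ ⊕ ⋯ ⊕ Rₙ with certainty.) -/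
open Matrix
open scoped ComplexOrder

/-- The qubit state `|r⟩ₛ` encoding the classical bit `r` in the standard basis (`s = false`)
or the diagonal basis (`s = true`): `|0⟩₀ = (1,0)`, `|1⟩₀ = (0,1)`, `|0⟩₁ = (1/√2)(1,1)`,
`|1⟩₁ = (1/√2)(1,−1)`. The component at index `false` is the first coordinate. -/
noncomputable def qubit (s r : Bool) : Bool → ℂ := fun t =>
  if s then (if r && t then -((1 / Real.sqrt 2 : ℝ) : ℂ) else ((1 / Real.sqrt 2 : ℝ) : ℂ))
  else (if r = t then 1 else 0)

/-- The `n`-qubit state `|φ^{s,r}⟩ = |r₁⟩_{s₁} ⊗ ⋯ ⊗ |rₙ⟩_{sₙ}`, realized as a vector on the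
index type `Fin n → Bool ≃ Fin 2ⁿ`. -/
noncomputable def phi {n : ℕ} (s r : Fin n → Bool) : (Fin n → Bool) → ℂ := fun t =>
  ∏ i, qubit (s i) (r i) (t i)

/-- The parity `r₁ ⊕ ⋯ ⊕ rₙ ∈ ZMod 2` of a bit string. -/
def parity {n : ℕ} (r : Fin n → Bool) : ZMod 2 := ∑ i, if r i then 1 else 0

/-- The density operator `ρ^{s,b} = 2^{−(n−1)} ∑_{r : r₁⊕⋯⊕rₙ = b} |φ^{s,r}⟩⟨φ^{s,r}|`. -/
noncomputable def rho (n : ℕ) (s : Fin n → Bool) (b : ZMod 2) :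
    Matrix (Fin n → Bool) (Fin n → Bool) ℂ :=
  ((2 : ℂ) ^ (n - 1))⁻¹ •
    ∑ r ∈ Finset.univ.filter (fun r : Fin n → Bool => parity r = b),
      vecMulVec (phi s r) (star (phi s r))


theorem qubit_orth (s r r' : Bool) :
    ∑ t, star (qubit s r t) * qubit s r' t = if r = r' then 1 else 0 := by
  have h : ((Real.sqrt 2 : ℝ) : ℂ)⁻¹ * ((Real.sqrt 2 : ℝ) : ℂ)⁻¹ = 1 / 2 := by
    rw [← mul_inv, ← Complex.ofReal_mul, Real.mul_self_sqrt (by norm_num)]; norm_num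
  cases s <;> cases r <;> cases r' <;> simp [qubit, h] <;> norm_num

theorem qubit_compl (s t t' : Bool) :
    ∑ r, qubit s r t * star (qubit s r t') = if t = t' then 1 else 0 := by
  have h : ((Real.sqrt 2 : ℝ) : ℂ)⁻¹ * ((Real.sqrt 2 : ℝ) : ℂ)⁻¹ = 1 / 2 := by
    rw [← mul_inv, ← Complex.ofReal_mul, Real.mul_self_sqrt (by norm_num)]; norm_num
  cases s <;> cases t <;> cases t' <;> simp [qubit, h] <;> norm_num

theorem prod_delta {n : ℕ} (r r' : Fin n → Bool) :
    (∏ i, if r i = r' i then (1 : ℂ) else 0) = if r = r' then 1 else 0 := by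
  rw [Finset.prod_ite_zero]
  simp [funext_iff]

theorem phi_orth {n : ℕ} (s r r' : Fin n → Bool) :
    star (phi s r) ⬝ᵥ phi s r' = if r = r' then 1 else 0 := by
  simp only [dotProduct, Pi.star_apply, phi, star_prod, ← Finset.prod_mul_distrib]
  rw [← prod_delta, ← Fintype.prod_sum
    (fun i t => star (qubit (s i) (r i) t) * qubit (s i) (r' i) t)]
  simp only [qubit_orth]

theorem phi_compl {n : ℕ} (s t t' : Fin n → Bool) :
    ∑ r, phi s r t * star (phi s r t') = if t = t' then 1 else 0 := by
  simp only [phi, star_prod, ← Finset.prod_mul_distrib]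
  rw [← prod_delta, ← Fintype.prod_sum
    (fun i r => qubit (s i) r (t i) * star (qubit (s i) r (t' i)))]
  simp only [qubit_compl]

theorem parity_cons {m : ℕ} (x : Bool) (r : Fin m → Bool) :
    parity (Fin.cons x r : Fin (m + 1) → Bool) = (if x then 1 else 0) + parity r := by
  simp only [parity, Fin.sum_univ_succ, Fin.cons_zero, Fin.cons_succ]

theorem parity_count (m : ℕ) (b : ZMod 2) :
    (∑ r : Fin (m + 1) → Bool, if parity r = b then (1 : ℂ) else 0) = 2 ^ m := by
  rw [← (Fin.consEquiv (fun _ : Fin (m + 1) => Bool)).sum_comp, Fintype.sum_prod_type_right]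
  have : ∀ r : Fin m → Bool, (∑ x : Bool, if parity
      ((Fin.consEquiv (fun _ : Fin (m + 1) => Bool)) (x, r)) = b then (1 : ℂ) else 0) = 1 := by
    intro r
    simp only [Fin.consEquiv, Equiv.coe_fn_mk, parity_cons, Fintype.sum_bool]
    generalize parity r = p
    have key : ∀ p b : ZMod 2, (1 + p = b ∧ ¬ p = b) ∨ (¬ 1 + p = b ∧ p = b) := by decide
    rcases key p b with ⟨h1, h2⟩ | ⟨h1, h2⟩ <;> simp [h1, h2]
  rw [Finset.sum_congr rfl (fun r _ => this r)]
  simp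

theorem stmt_8 (n : ℕ) (hn : 1 ≤ n) (s : Fin n → Bool) :
    ∃ M : ZMod 2 → Matrix (Fin n → Bool) (Fin n → Bool) ℂ,
      (∀ b, (M b).PosSemidef) ∧ (M 0 + M 1 = 1) ∧
      ∀ b b', (M b * rho n s b').trace = if b = b' then 1 else 0 := by
  refine ⟨fun b => ∑ r ∈ Finset.univ.filter (fun r : Fin n → Bool => parity r = b),
      vecMulVec (phi s r) (star (phi s r)), ?_, ?_, ?_⟩
  · intro b
    exact Matrix.posSemidef_sum _ (fun r _ => Matrix.posSemidef_vecMulVec_self_star _)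
  · have h01 : ∀ p : ZMod 2, p = 1 ↔ ¬ p = 0 := by decide
    simp only [h01]
    rw [Finset.sum_filter_add_sum_filter_not]
    ext t t'
    rw [Matrix.sum_apply, Matrix.one_apply, ← phi_compl s t t']
    simp [vecMulVec_apply]
  · intro b b'
    obtain ⟨m, rfl⟩ : ∃ m, n = m + 1 := ⟨n - 1, by omega⟩
    have key : ∀ r r' : Fin (m + 1) → Bool,
        (vecMulVec (phi s r) (star (phi s r)) * vecMulVec (phi s r') (star (phi s r'))).trace
          = if r = r' then 1 else 0 := by
      intro r r'
      rw [vecMulVec_mul_vecMulVec, phi_orth]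
      split_ifs with h
      · subst h
        rw [one_smul, trace_vecMulVec, dotProduct_comm, phi_orth, if_pos rfl]
      · simp
    simp only [rho, Matrix.mul_smul, Matrix.trace_smul, Finset.sum_mul_sum, Matrix.trace_sum, key]
    simp only [Finset.sum_ite_eq, Finset.mem_filter, Finset.mem_univ, true_and]
    rw [Finset.sum_filter]
    by_cases hb : b = b'
    · subst hb
      have : ∀ r : Fin (m + 1) → Bool, (if parity r = b then (if parity r = b then (1 : ℂ) else 0)
          else 0) = if parity r = b then 1 else 0 := by
        intro r; split_ifs <;> rfl
      simp only [this, parity_count]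
      simp
    · rw [if_neg hb, Finset.sum_eq_zero, smul_zero]
      intro r _
      by_cases h : parity r = b
      · have : ¬ parity r = b' := fun h' => hb (h.symm.trans h')
        simp [h, hb]
      · simp [h]
end

section
/- Fix n ≥ 1 and for each i ∈ {1,…,n} let M₀^{(i)} and M₁^{(i)} be positive semidefinite 2×2 complex matrices with M₀^{(i)} + M₁^{(i)} = I (a per-qubit two-outcome POVM). Consider the adversary who, for uniformly random independent s, r ∈ {0,1}^n, measures the i-th qubit |rᵢ⟩_{sᵢ} with this POVM, obtaining outcomes z₁,…,zₙ, and guesses the parity r₁ ⊕ ⋯ ⊕ rₙ by z₁ ⊕ ⋯ ⊕ zₙ. Then the success probability, namely 4^{−n} · ∑_{s,r ∈ {0,1}^n} ∑_{z ∈ {0,1}^n : z₁⊕⋯⊕zₙ = r₁⊕⋯⊕rₙ} ∏_{i=1}^{n} ⟨rᵢ|_{sᵢ} M_{zᵢ}^{(i)} |rᵢ⟩_{sᵢ}, is at most 1/2 + (1/2)·(√2/2)^n. (This makes precise that, for independent per-qubit measurements, the adversary's probability of guessing the key bit S_{n+1} = R₁ ⊕ ⋯ ⊕ Rₙ is exponentially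 close in n to that of guessing a random bit.) -/
open Matrix
open scoped ComplexOrder

theorem sum_prod_three {n : ℕ} (F : Fin n → Bool → Bool → Bool → ℂ) :
    (∑ s : Fin n → Bool, ∑ r : Fin n → Bool, ∑ z : Fin n → Bool, ∏ i, F i (s i) (r i) (z i))
      = ∏ i, ∑ a, ∑ b, ∑ c, F i a b c := by
  rw [Fintype.prod_sum]
  refine Finset.sum_congr rfl fun s _ => ?_
  rw [Fintype.prod_sum]
  refine Finset.sum_congr rfl fun r _ => ?_
  rw [Fintype.prod_sum]

/-- The sign of a bit. -/
def bitSign (b : Bool) : ℂ := if b then -1 else 1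

/-- The sign of an element of `ZMod 2`. -/
def zSign (x : ZMod 2) : ℂ := if x = 0 then 1 else -1

theorem zSign_add (x y : ZMod 2) : zSign (x + y) = zSign x * zSign y := by
  have h2 : (1 : ZMod 2) + 1 = 0 := by decide
  have h : ∀ x : ZMod 2, x = 0 ∨ x = 1 := by decide
  rcases h x with rfl | rfl <;> rcases h y with rfl | rfl <;> simp [zSign, h2]

theorem prod_bitSign {n : ℕ} (r : Fin n → Bool) : ∏ i, bitSign (r i) = zSign (parity r) := by
  unfold parity
  have key : ∀ S : Finset (Fin n),
      ∏ i ∈ S, bitSign (r i) = zSign (∑ i ∈ S, if r i then 1 else 0) := by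
    intro S
    induction S using Finset.induction_on with
    | empty => simp [zSign]
    | insert a S ha ih =>
      rw [Finset.prod_insert ha, Finset.sum_insert ha, zSign_add, ih]
      congr 1
      cases r a <;> simp [bitSign, zSign]
  exact key _

theorem ind_eq (x y : ZMod 2) : (if x = y then (1 : ℂ) else 0) = (1 + zSign y * zSign x) / 2 := by
  have h : ∀ x : ZMod 2, x = 0 ∨ x = 1 := by decide
  rcases h x with rfl | rfl <;> rcases h y with rfl | rfl <;> simp [zSign]

theorem inv_sqrt_two_sq : ((Real.sqrt 2 : ℂ))⁻¹ * ((Real.sqrt 2 : ℂ))⁻¹ = 1 / 2 := by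
  rw [← mul_inv, ← Complex.ofReal_mul, Real.mul_self_sqrt (by norm_num)]
  norm_num

theorem sum_total (A B : Matrix Bool Bool ℂ) (h : A + B = 1) :
    (∑ s : Bool, ∑ r : Bool, ∑ z : Bool, (star (qubit s r) ⬝ᵥ ((if z then B else A) *ᵥ qubit s r))) = 4 := by
  have hB : B = 1 - A := by rw [← h]; abel
  subst hB
  have h2 := inv_sqrt_two_sq
  simp [qubit, dotProduct, mulVec, Matrix.one_apply]
  linear_combination (4 : ℂ) * h2

theorem sum_signed (A B : Matrix Bool Bool ℂ) (h : A + B = 1) (hA : A.PosSemidef)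
    (hB : B.PosSemidef) :
    ∃ β : ℝ, (∑ s, ∑ r, ∑ z, (bitSign r * bitSign z) *
      (star (qubit s r) ⬝ᵥ ((if z then B else A) *ᵥ qubit s r))) = ((4 * β : ℝ) : ℂ)
      ∧ |β| ≤ Real.sqrt 2 / 2 := by
  have hB' : B = 1 - A := by rw [← h]; abel
  subst hB'
  have h2 := inv_sqrt_two_sq
  have hh : A true false = star (A false true) := (hA.1.apply true false).symm
  have ha := hA.diag_nonneg (i := false)
  have hc := hA.diag_nonneg (i := true)
  have ha' := hB.diag_nonneg (i := false)
  have hc' := hB.diag_nonneg (i := true)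
  have hd : 0 ≤ A false false * A true true - A false true * A true false := by
    have := hA.submatrix finTwoEquiv |>.det_nonneg
    rw [Matrix.det_fin_two] at this
    simpa [finTwoEquiv] using this
  have hd' : 0 ≤ (1 - A false false) * (1 - A true true) - A false true * A true false := by
    have := hB.submatrix finTwoEquiv |>.det_nonneg
    rw [Matrix.det_fin_two] at this
    simpa [finTwoEquiv, Matrix.one_apply] using this
  simp [Matrix.one_apply] at ha' hc'
  rw [Complex.le_def] at ha hc ha' hc' hd hd'
  rw [hh] at hd hd'
  obtain ⟨ha, ia⟩ := ha
  obtain ⟨hc, ic⟩ := hc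
  have ha' := ha'.1
  have hc' := hc'.1
  have hd := hd.1
  have hd' := hd'.1
  simp at ha hc ha' hc' hd hd' ia ic
  rw [← ia, ← ic] at hd hd'
  set a := (A false false).re with a_def
  set c := (A true true).re with c_def
  set x := (A false true).re with x_def
  set y := (A false true).im with y_def
  refine ⟨(a - c + 2 * x) / 2, ?_, ?_⟩
  · have e1 : A false false = (a : ℂ) := Complex.ext (by simp [a_def]) (by simp [← ia])
    have e2 : A true true = (c : ℂ) := Complex.ext (by simp [c_def]) (by simp [← ic])
    have e3 : A false true = x + y * Complex.I := Complex.ext (by simp [x_def]) (by simp [y_def])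
    have e4 : A true false = x - y * Complex.I := by
      rw [hh, e3]; simp [Complex.ext_iff]
    simp [qubit, dotProduct, mulVec, Matrix.one_apply, bitSign, e1, e2, e3, e4]
    linear_combination (8 * x : ℂ) * h2
  · have hs : Real.sqrt 2 ^ 2 = 2 := Real.sq_sqrt (by norm_num)
    have h4 : (a - c) ^ 2 + 4 * x ^ 2 ≤ 1 := by
      rcases le_total (a + c) 1 with h | h
      · nlinarith [sq_nonneg y]
      · nlinarith [sq_nonneg y]
    apply abs_le_of_sq_le_sq _ (by positivity)
    nlinarith [sq_nonneg (a - c - 2 * x)]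

/-- An adversary measuring each qubit `|rᵢ⟩_{sᵢ}` (for uniformly random
independent `s, r ∈ {0,1}ⁿ`) with a per-qubit two-outcome POVM `(M₀⁽ⁱ⁾, M₁⁽ⁱ⁾)` and guessing
the parity `r₁ ⊕ ⋯ ⊕ rₙ` by the parity of her outcomes succeeds with probability
`4⁻ⁿ ∑_{s,r} ∑_{z : parity z = parity r} ∏ᵢ ⟨rᵢ|_{sᵢ} M_{zᵢ}⁽ⁱ⁾ |rᵢ⟩_{sᵢ}`,
which is a real number at most `1/2 + (1/2)(√2/2)ⁿ`. -/
theorem stmt_9 (n : ℕ) (hn : 1 ≤ n) (M : Fin n → Bool → Matrix Bool Bool ℂ)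
    (hpsd : ∀ i b, (M i b).PosSemidef) (hsum : ∀ i, M i false + M i true = 1) :
    ∃ t : ℝ,
      ((4 : ℂ) ^ n)⁻¹ *
          (∑ s : Fin n → Bool, ∑ r : Fin n → Bool,
            ∑ z ∈ Finset.univ.filter (fun z : Fin n → Bool => parity z = parity r),
              ∏ i, (star (qubit (s i) (r i)) ⬝ᵥ ((M i (z i)) *ᵥ qubit (s i) (r i))))
        = (t : ℂ)
      ∧ t ≤ 1 / 2 + (1 / 2) * (Real.sqrt 2 / 2) ^ n := by
  have hM : ∀ i z, M i z = if z then M i true else M i false := by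
    intro i z; cases z <;> rfl
  have htot := fun i => sum_total (M i false) (M i true) (hsum i)
  choose β hβ hβle using fun i =>
    sum_signed (M i false) (M i true) (hsum i) (hpsd i false) (hpsd i true)
  simp only [← hM] at htot hβ
  refine ⟨1 / 2 + 1 / 2 * ∏ i, β i, ?_, ?_⟩
  · have h1 := sum_prod_three (fun i s r z => star (qubit s r) ⬝ᵥ (M i z *ᵥ qubit s r))
    have h2 := sum_prod_three (fun i s r z => (bitSign r * bitSign z) *
      (star (qubit s r) ⬝ᵥ (M i z *ᵥ qubit s r)))
    simp only [htot, hβ] at h1 h2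
    have h3 : (∑ s : Fin n → Bool, ∑ r : Fin n → Bool,
            ∑ z ∈ Finset.univ.filter (fun z : Fin n → Bool => parity z = parity r),
              ∏ i, (star (qubit (s i) (r i)) ⬝ᵥ ((M i (z i)) *ᵥ qubit (s i) (r i))))
        = 1 / 2 * (∏ _i : Fin n, (4 : ℂ)) + 1 / 2 * ∏ i, ((4 * β i : ℝ) : ℂ) := by
      rw [← h1, ← h2]
      simp only [Finset.mul_sum, ← Finset.sum_add_distrib]
      refine Finset.sum_congr rfl fun s _ => Finset.sum_congr rfl fun r _ => ?_
      rw [Finset.sum_filter]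
      refine Finset.sum_congr rfl fun z _ => ?_
      rw [Finset.prod_mul_distrib, Finset.prod_mul_distrib, prod_bitSign, prod_bitSign]
      rw [← mul_boole, ind_eq]
      ring
    rw [h3]
    push_cast
    rw [Finset.prod_mul_distrib]
    simp only [Finset.prod_const, Finset.card_univ, Fintype.card_fin]
    have h4 : (4 : ℂ) ^ n ≠ 0 := by positivity
    field_simp
  · have : ∏ i, β i ≤ (Real.sqrt 2 / 2) ^ n := by
      calc ∏ i, β i ≤ |∏ i, β i| := le_abs_self _
        _ = ∏ i, |β i| := Finset.abs_prod _ _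
        _ ≤ ∏ _i : Fin n, (Real.sqrt 2 / 2) :=
          Finset.prod_le_prod (fun i _ => abs_nonneg _) (fun i _ => hβle i)
        _ = _ := by rw [Finset.prod_const, Finset.card_univ, Fintype.card_fin]
    linarith
end

section
/- Let γ, ρ, ν be strictly positive real numbers. Then for every ε > 0 there exist real numbers ℓ ≥ 0, n ≥ 1 and c > 0 such that, setting nᵢ := n + c·i and ℓᵢ := ℓ + c·ρ·i/2 for every integer i ≥ 0, the series ∑_{i=1}^{∞} ( exp(−γ·(ρ·nᵢ − ℓᵢ − ℓ)) + exp(−ν·ℓ_{i−1} + log nᵢ) ) is summable and its sum is at most ε. (This is the claim that, with the stated choice of round lengths, the total security parameter of the continuous key stream obtained by sequentially composing rounds of a QKD protocol can be made arbitrarily small.) -/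
/-- For any positive constants `γ, ρ, ν` and any `ε > 0` one can choose
`ℓ ≥ 0`, `n ≥ 1` and `c > 0` such that, with `nᵢ = n + c·i` and `ℓᵢ = ℓ + c·ρ·i/2`, the
series `∑_{i=1}^∞ ( exp(−γ(ρ·nᵢ − ℓᵢ − ℓ)) + exp(−ν·ℓ_{i−1} + log nᵢ) )` of per-round
insecurities of the sequentially composed QKD rounds is summable with sum at most `ε`.
(The series over `i ≥ 1` is indexed here by `j : ℕ` via `i = j + 1`.) -/
theorem stmt_10 (γ ρ ν : ℝ) (hγ : 0 < γ) (hρ : 0 < ρ) (hν : 0 < ν) :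
    ∀ ε > (0 : ℝ), ∃ ℓ n c : ℝ, 0 ≤ ℓ ∧ 1 ≤ n ∧ 0 < c ∧
      Summable (fun j : ℕ =>
        Real.exp (-γ * (ρ * (n + c * (j + 1)) - (ℓ + c * ρ * (j + 1) / 2) - ℓ)) +
        Real.exp (-ν * (ℓ + c * ρ * j / 2) + Real.log (n + c * (j + 1)))) ∧
      (∑' j : ℕ,
        (Real.exp (-γ * (ρ * (n + c * (j + 1)) - (ℓ + c * ρ * (j + 1) / 2) - ℓ)) +
         Real.exp (-ν * (ℓ + c * ρ * j / 2) + Real.log (n + c * (j + 1))))) ≤ ε := by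
  intro ε hε
  set q := Real.exp (-γ * ρ / 2) with hq
  set r := Real.exp (-ν * ρ / 2) with hr
  have hq1 : q < 1 := by
    rw [hq, Real.exp_lt_one_iff]
    nlinarith [mul_pos hγ hρ]
  have hr1 : r < 1 := by
    rw [hr, Real.exp_lt_one_iff]
    nlinarith [mul_pos hν hρ]
  have hq0 : 0 < q := Real.exp_pos _
  have hr0 : 0 < r := Real.exp_pos _
  have sq : Summable (fun j : ℕ => q ^ j) := summable_geometric_of_lt_one hq0.le hq1
  have sr : Summable (fun j : ℕ => r ^ j) := summable_geometric_of_lt_one hr0.le hr1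
  have sj : Summable (fun j : ℕ => (j : ℝ) * r ^ j) := by
    have := summable_pow_mul_geometric_of_norm_lt_one (R := ℝ) 1 (r := r)
      (by rw [Real.norm_of_nonneg hr0.le]; exact hr1)
    simpa using this
  obtain ⟨A, hA⟩ := sq
  obtain ⟨B, hB⟩ := sr
  obtain ⟨C, hC⟩ := sj
  have key : ∀ b : ℝ, 0 < b → Filter.Tendsto (fun x : ℝ => Real.exp (-b * x)) Filter.atTop (nhds 0) := by
    intro b hb
    have := tendsto_rpow_mul_exp_neg_mul_atTop_nhds_zero 0 b hb
    simpa using this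
  have key1 : Filter.Tendsto (fun x : ℝ => x * Real.exp (-ν * x)) Filter.atTop (nhds 0) := by
    have := tendsto_rpow_mul_exp_neg_mul_atTop_nhds_zero 1 ν hν
    simpa using this
  have lim : Filter.Tendsto (fun x : ℝ => Real.exp (-γ * (3 * ρ / 2)) * Real.exp (-γ * x) * A +
      (2 * B * Real.exp (-ν * x) + 3 / ρ * B * (x * Real.exp (-ν * x)) + C * Real.exp (-ν * x)))
      Filter.atTop (nhds 0) := by
    have := (((key γ hγ).const_mul (Real.exp (-γ * (3 * ρ / 2)))).mul_const A).add
      ((((key ν hν).const_mul (2 * B)).add (key1.const_mul (3 / ρ * B))).add ((key ν hν).const_mul C))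
    simpa using this
  obtain ⟨x, hx, hx0⟩ := ((lim.eventually (gt_mem_nhds hε)).and
    (Filter.eventually_ge_atTop (0 : ℝ))).exists
  have h3 : 0 ≤ 3 * x / ρ := by positivity
  have H : HasSum (fun j : ℕ =>
        Real.exp (-γ * (ρ * ((1 + 3 * x / ρ) + 1 * (j + 1)) - (x + 1 * ρ * (j + 1) / 2) - x)) +
        Real.exp (-ν * (x + 1 * ρ * j / 2) + Real.log ((1 + 3 * x / ρ) + 1 * (j + 1))))
      (Real.exp (-γ * (3 * ρ / 2)) * Real.exp (-γ * x) * A +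
      (2 * B * Real.exp (-ν * x) + 3 / ρ * B * (x * Real.exp (-ν * x)) + C * Real.exp (-ν * x))) := by
    have H1 := (hA.mul_left (Real.exp (-γ * (3 * ρ / 2)) * Real.exp (-γ * x))).add
      ((hB.mul_left ((2 + 3 * x / ρ) * Real.exp (-ν * x))).add (hC.mul_left (Real.exp (-ν * x))))
    convert H1 using 1
    · rfl
    · funext j
      congr 1
      · rw [hq, ← Real.exp_nat_mul, ← Real.exp_add, ← Real.exp_add]
        congr 1
        field_simp
        ring
      · rw [Real.exp_add, Real.exp_log (by positivity)]
        have : Real.exp (-ν * (x + 1 * ρ * j / 2)) = Real.exp (-ν * x) * r ^ j := by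
          rw [hr, ← Real.exp_nat_mul, ← Real.exp_add]
          congr 1
          ring
        rw [this]
        ring
    · ring
  refine ⟨x, 1 + 3 * x / ρ, 1, hx0, by linarith, one_pos, H.summable, ?_⟩
  rw [H.tsum_eq]
  exact hx.le
end
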